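/- Let β ∈ (0,1), α ∈ (0,1+β), and 0 < R ≤ R_1 < ∞. Fix ζ ∈ C_0^∞(B_1) nonnegative, radial, with ∫_{ℝ^d} ζ = 1. There exists a constant C > 0 depending only on d, β, α, ζ such that for every continuous u : ℝ^d → ℝ with [u]_{Λ^α(B_{2R_1})} < ∞, the mollification u^{(R)} satisfies [∇u^{(R)}]_{β;B_{R_1}} ≤ C R^{α−1−β} [u]_{Λ^α(B_{2R_1})}. -/

import Mathlib

open MeasureTheory Metric Filter Set
open scoped ENNReal Topology

noncomputable section

/-- Hölder seminorm `[u]_{γ;Ω}` (valued in `ℝ≥0∞`). -/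
def holderSemi {E F : Type*} [NormedAddCommGroup E] [NormedAddCommGroup F]
    (γ : ℝ) (Ω : Set E) (u : E → F) : ℝ≥0∞ :=
  ⨆ (x : E) (_ : x ∈ Ω) (y : E) (_ : y ∈ Ω) (_ : x ≠ y),
    ENNReal.ofReal (‖u x - u y‖ / ‖x - y‖ ^ γ)

/-- Zygmund seminorm `[u]_{Λ^α(Ω)}` (valued in `ℝ≥0∞`). -/
def zygmundSemi {E : Type*} [NormedAddCommGroup E] (α : ℝ) (Ω : Set E) (u : E → ℝ) : ℝ≥0∞ :=
  ⨆ (x : E) (h : E) (_ : h ≠ 0) (_ : x ∈ Ω) (_ : x + h ∈ Ω) (_ : x - h ∈ Ω),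
    ENNReal.ofReal (|u (x + h) + u (x - h) - 2 * u x| / ‖h‖ ^ α)

/-- The `L_∞` norm of `u` on `Ω` (valued in `ℝ≥0∞`). -/
def eSupNorm {E : Type*} (Ω : Set E) (u : E → ℝ) : ℝ≥0∞ :=
  ⨆ (x : E) (_ : x ∈ Ω), ENNReal.ofReal |u x|

/-- A Dini function: nonnegative, nondecreasing on `(0,∞)`, with `∫_0^1 ω(r)/r dr < ∞`. -/
def IsDini (ω : ℝ → ℝ) : Prop :=
  (∀ r, 0 < r → 0 ≤ ω r) ∧ MonotoneOn ω (Set.Ioi (0:ℝ)) ∧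
    IntegrableOn (fun r => ω r / r) (Set.Ioc (0:ℝ) 1)

/-- Mollification `u^{(R)}(x) = ∫ u(x - Ry) ζ(y) dy`. -/
def mollify {d : ℕ} (R : ℝ) (ζ u : EuclideanSpace ℝ (Fin d) → ℝ)
    (x : EuclideanSpace ℝ (Fin d)) : ℝ :=
  ∫ y, u (x - R • y) * ζ y

lemma core_est {E : Type*} [NormedAddCommGroup E] [NormedSpace ℝ E]
    (β α A K r : ℝ) (hβ : 0 < β) (hβ1 : β < 1) (hα : 0 < α) (hα1 : α < 1 + β)
    (hA : 0 ≤ A) (hK : 0 ≤ K) (V : E → ℝ) (hV : Differentiable ℝ V)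
    (e : E) (he : ‖e‖ = 1) (hr : 1 ≤ r)
    (hH : ∀ x ∈ ball (0:E) (2*r-1), ∀ y ∈ ball (0:E) (2*r-1),
      |fderiv ℝ V x e - fderiv ℝ V y e| ≤ A * K * ‖x - y‖)
    (hZ : ∀ x h : E, x ∈ ball (0:E) (2*r-1) → x + h ∈ ball (0:E) (2*r-1) →
      x - h ∈ ball (0:E) (2*r-1) → |V (x+h) + V (x-h) - 2 * V x| ≤ K * ‖h‖^α)
    (x y : E) (hx : x ∈ ball (0:E) r) (hy : y ∈ ball (0:E) r) :
    |fderiv ℝ V x e - fderiv ℝ V y e| ≤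
      (6 * A + 2 * (1/(2^β-1)) + 50) * K * ‖x - y‖^β := by
  have h2β : 1 < (2:ℝ)^β := Real.one_lt_rpow (by norm_num) hβ
  have hG : 0 < 1/((2:ℝ)^β-1) := by
    have : 0 < (2:ℝ)^β-1 := by linarith
    positivity
  set G := 1/((2:ℝ)^β-1) with hGdef
  have hx' := mem_ball_zero_iff.1 hx
  have hy' := mem_ball_zero_iff.1 hy
  set s := ‖x - y‖ with hs
  have hs0 : 0 ≤ s := norm_nonneg _
  have hsr : s < 2 * r := by
    have := norm_sub_le x y
    linarith
  have hsβ : 0 ≤ s^β := Real.rpow_nonneg hs0 _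
  by_cases h4 : s ≤ 4
  · have h1 := hH x (mem_ball_zero_iff.2 (by linarith)) y (mem_ball_zero_iff.2 (by linarith))
    have h2 : s ≤ 4 * s^β := by
      rcases hs0.eq_or_lt with h0 | h0
      · rw [← h0] at hsβ ⊢; linarith
      · have : s = s^(1-β) * s^β := by
          rw [← Real.rpow_add h0]; simp
        have h3 : s^(1-β) ≤ 4^(1-β) := Real.rpow_le_rpow hs0 h4 (by linarith)
        have h5 : (4:ℝ)^(1-β) ≤ 4^(1:ℝ) := Real.rpow_le_rpow_of_exponent_le (by norm_num) (by linarith)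
        rw [Real.rpow_one] at h5
        calc s = s^(1-β) * s^β := this
          _ ≤ 4 * s^β := by gcongr; linarith
    calc _ ≤ A * K * s := h1
      _ ≤ A * K * (4 * s^β) := by gcongr
      _ = (4 * A) * K * s^β := by ring
      _ ≤ _ := by gcongr; linarith
  push Not at h4
  obtain ⟨J, hJ1, hJ2⟩ := exists_nat_pow_near (x := s/4) (y := (2:ℝ)) (by linarith) (by norm_num)
  have hpow : ∀ j ≤ J, (2:ℝ)^j < r/2 := fun j hj => by
    have : (2:ℝ)^j ≤ 2^J := pow_le_pow_right₀ (by norm_num) hj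
    linarith
  have hin : ∀ z : E, ‖z‖ < r → ∀ t : ℝ, 0 ≤ t → t < r/2 → z + t • e ∈ ball (0:E) (2*r-1) := by
    intro z hz t ht0 ht
    rw [mem_ball_zero_iff]
    have := norm_add_le z (t • e)
    rw [norm_smul, he, Real.norm_of_nonneg ht0] at this
    linarith
  have hinz : ∀ z : E, ‖z‖ < r → z ∈ ball (0:E) (2*r-1) := fun z hz => by
    rw [mem_ball_zero_iff]; linarith
  let D : ℕ → E → ℝ := fun j z => (V (z + (2:ℝ)^j • e) - V z) / 2^j
  have hαβ : ∀ t : ℝ, 1 ≤ t → t^α ≤ t * t^β := fun t ht => by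
    have h0 : t * t^β = t^(1+β) := by
      rw [Real.rpow_add (by linarith), Real.rpow_one]
    rw [h0]
    exact Real.rpow_le_rpow_of_exponent_le ht hα1.le
  -- telescoping
  have hstep : ∀ z : E, ‖z‖ < r → ∀ j, j + 1 ≤ J → |D (j+1) z - D j z| ≤ K * ((2:ℝ)^β)^j := by
    intro z hz j hj
    have hp : (0:ℝ) < 2^j := by positivity
    have hp1 : (1:ℝ) ≤ 2^j := one_le_pow₀ (by norm_num)
    have e1 : z + (2:ℝ)^j • e + (2:ℝ)^j • e = z + (2:ℝ)^(j+1) • e := by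
      rw [add_assoc, ← add_smul]; congr 2; ring
    have e2 : z + (2:ℝ)^j • e - (2:ℝ)^j • e = z := by simp
    have h1 := hZ (z + (2:ℝ)^j • e) ((2:ℝ)^j • e)
      (hin z hz _ hp.le (hpow j (by omega)))
      (by rw [e1]; exact hin z hz _ (by positivity) (hpow _ hj))
      (by rw [e2]; exact hinz z hz)
    rw [e1, e2, norm_smul, he, Real.norm_of_nonneg hp.le, mul_one] at h1
    have h2 : D (j+1) z - D j z =
      (V (z + (2:ℝ)^(j+1) • e) + V z - 2 * V (z + (2:ℝ)^j • e)) / 2^(j+1) := by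
      simp only [D]; field_simp; ring
    rw [h2, abs_div, abs_of_pos (by positivity : (0:ℝ) < 2^(j+1)), div_le_iff₀ (by positivity)]
    have h3 := hαβ _ hp1
    have h4 : ((2:ℝ)^j)^β = ((2:ℝ)^β)^j := by
      rw [← Real.rpow_natCast, ← Real.rpow_natCast, ← Real.rpow_mul (by norm_num), ← Real.rpow_mul (by norm_num), mul_comm]
    rw [h4] at h3
    have h5 : (0:ℝ) ≤ ((2:ℝ)^β)^j := by positivity
    calc _ ≤ K * ((2:ℝ)^j)^α := h1
      _ ≤ K * (2^j * ((2:ℝ)^β)^j) := by gcongr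
      _ ≤ K * (2^(j+1) * ((2:ℝ)^β)^j) := by
        gcongr
        · norm_num
        · omega
      _ = _ := by ring
  have htel : ∀ z : E, ‖z‖ < r → ∀ j, j ≤ J → |D j z - D 0 z| ≤ K * G * (((2:ℝ)^β)^j - 1) := by
    intro z hz j
    induction j with
    | zero => intro _; simp
    | succ j ih =>
      intro hj
      have h1 := ih (by omega)
      have h2 := hstep z hz j hj
      have h3 := abs_sub_le (D (j+1) z) (D j z) (D 0 z)
      have h4 : K * ((2:ℝ)^β)^j = K * G * ((2^β - 1) * ((2:ℝ)^β)^j) := by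
        have : (2:ℝ)^β - 1 ≠ 0 := by linarith
        rw [hGdef]; field_simp
      calc _ ≤ K * G * ((2^β - 1) * ((2:ℝ)^β)^j) + K * G * (((2:ℝ)^β)^j - 1) := by linarith
        _ = _ := by ring
  have hpJ : ((2:ℝ)^β)^J ≤ s^β := by
    have h4 : ((2:ℝ)^J)^β = ((2:ℝ)^β)^J := by
      rw [← Real.rpow_natCast, ← Real.rpow_natCast, ← Real.rpow_mul (by norm_num), ← Real.rpow_mul (by norm_num), mul_comm]
    rw [← h4]
    exact Real.rpow_le_rpow (by positivity) (by linarith) hβ.le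
  have hs1 : 1 ≤ s^β := Real.one_le_rpow (by linarith) hβ.le
  -- derivative vs D 0
  have hD0 : ∀ z : E, ‖z‖ < r → |fderiv ℝ V z e - D 0 z| ≤ A * K := by
    intro z hz
    have hd : ∀ t : ℝ, HasDerivAt (fun t : ℝ => V (z + t • e)) (fderiv ℝ V (z + t • e) e) t := by
      intro t
      have h1 : HasDerivAt (fun t : ℝ => z + t • e) e t := by
        simpa using ((hasDerivAt_id t).smul_const e).const_add z
      exact (hV (z + t • e)).hasFDerivAt.comp_hasDerivAt t h1
    obtain ⟨t, ht, hte⟩ := exists_hasDerivAt_eq_slope (fun t : ℝ => V (z + t • e)) _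
      (zero_lt_one) (fun t _ => (hd t).continuousAt.continuousWithinAt) (fun t _ => hd t)
    have h0 : D 0 z = fderiv ℝ V (z + t • e) e := by
      rw [hte]; simp [D]
    rw [h0]
    have h1 := hH z (hinz z hz) (z + t • e) (hin z hz t ht.1.le (by linarith [ht.2]))
    refine h1.trans ?_
    have : ‖z - (z + t • e)‖ ≤ 1 := by
      simp [norm_smul, he, abs_of_pos ht.1, ht.2.le]
    calc A * K * _ ≤ A * K * 1 := by gcongr
      _ = _ := by ring
  -- parallelogram
  have hpar : |D J x - D J y| ≤ 50 * K * s^β := by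
    set ρ : ℝ := 2^J with hρ
    have hρ1 : 1 ≤ ρ := one_le_pow₀ (by norm_num)
    have hρr := hpow J le_rfl
    rw [← hρ] at hρr
    have hs8 : s ≤ 8 * ρ := by
      have : (2:ℝ)^(J+1) = 2 * ρ := by rw [hρ]; ring
      linarith
    let c : E := (1/2:ℝ) • (x + y + ρ • e)
    let k : E := (1/2:ℝ) • (x + ρ • e - y)
    let l : E := (1/2:ℝ) • (x - (y + ρ • e))
    have c1 : c + k = x + ρ • e := by simp only [c, k]; module
    have c2 : c - k = y := by simp only [c, k]; module
    have c3 : c + l = x := by simp only [c, l]; module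
    have c4 : c - l = y + ρ • e := by simp only [c, l]; module
    have ix := hin x hx' ρ (by linarith) hρr
    have iy := hin y hy' ρ (by linarith) hρr
    have ic : c ∈ ball (0:E) (2*r-1) := by
      have hc : c = (1/2:ℝ) • (x + ρ • e) + (1/2:ℝ) • y := by simp only [c]; module
      rw [hc]
      exact convex_ball _ _ ix (hinz y hy') (by norm_num) (by norm_num) (by norm_num)
    have b1 := hZ c k ic (by rw [c1]; exact ix) (by rw [c2]; exact hinz y hy')
    have b2 := hZ c l ic (by rw [c3]; exact hinz x hx') (by rw [c4]; exact iy)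
    rw [c1, c2] at b1
    rw [c3, c4] at b2
    have nρ : ‖ρ • e‖ = ρ := by rw [norm_smul, he, Real.norm_of_nonneg (by linarith), mul_one]
    have nk : ‖k‖ ≤ 5 * ρ := by
      simp only [k]
      have h1 : x + ρ • e - y = (x - y) + ρ • e := by module
      rw [norm_smul, h1]
      have := norm_add_le (x-y) (ρ • e)
      rw [nρ] at this
      norm_num
      linarith
    have nl : ‖l‖ ≤ 5 * ρ := by
      simp only [l]
      have h1 : x - (y + ρ • e) = (x - y) - ρ • e := by module
      rw [norm_smul, h1]
      have := norm_sub_le (x-y) (ρ • e)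
      rw [nρ] at this
      norm_num
      linarith
    have hbig : (5 * ρ)^α ≤ 25 * (ρ * s^β) := by
      rw [Real.mul_rpow (by norm_num) (by linarith)]
      have h1 : (5:ℝ)^α ≤ 5^(2:ℝ) := Real.rpow_le_rpow_of_exponent_le (by norm_num) (by linarith)
      have h2 : (5:ℝ)^(2:ℝ) = 25 := by norm_num
      have h3 : ρ^α ≤ ρ * s^β := (hαβ ρ hρ1).trans (by gcongr; linarith)
      have : 0 ≤ ρ^α := Real.rpow_nonneg (by linarith) _
      calc _ ≤ 25 * ρ^α := by gcongr; linarith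
        _ ≤ _ := by gcongr
    have b1' : K * ‖k‖^α ≤ K * (25 * (ρ * s^β)) := by
      gcongr
      exact (Real.rpow_le_rpow (norm_nonneg _) nk hα.le).trans hbig
    have b2' : K * ‖l‖^α ≤ K * (25 * (ρ * s^β)) := by
      gcongr
      exact (Real.rpow_le_rpow (norm_nonneg _) nl hα.le).trans hbig
    have h2 : D J x - D J y = ((V (x + ρ • e) + V y - 2 * V c) - (V x + V (y + ρ • e) - 2 * V c)) / ρ := by
      simp only [D]; rw [← hρ]; field_simp; ring
    rw [h2, abs_div, abs_of_pos (by linarith : 0 < ρ), div_le_iff₀ (by linarith)]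
    have := abs_sub (V (x + ρ • e) + V y - 2 * V c) (V x + V (y + ρ • e) - 2 * V c)
    linarith
  have t1 := hD0 x hx'
  have t2 := hD0 y hy'
  have t3 := htel x hx' J le_rfl
  have t4 := htel y hy' J le_rfl
  have t5 : K * G * (((2:ℝ)^β)^J - 1) ≤ K * G * s^β := by gcongr; linarith
  have t6 : A * K ≤ A * K * s^β := le_mul_of_one_le_right (by positivity) hs1
  have f : |fderiv ℝ V x e - fderiv ℝ V y e| ≤
      2 * (A * K) + 2 * (K * G * s^β) + 50 * K * s^β := by
    rw [abs_le] at *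
    constructor <;> linarith [t1.1, t1.2, t2.1, t2.2, t3.1, t3.2, t4.1, t4.2, hpar.1, hpar.2]
  have : 0 ≤ A * K * s^β := by positivity
  linarith

lemma conv_deriv {d : ℕ} (f u : EuclideanSpace ℝ (Fin d) → ℝ) (hf : ContDiff ℝ 1 f)
    (hc : HasCompactSupport f) (hu : Continuous u) (x e : EuclideanSpace ℝ (Fin d)) :
    DifferentiableAt ℝ (fun x => ∫ y, u (x - y) * f y) x ∧
    fderiv ℝ (fun x => ∫ y, u (x - y) * f y) x e = ∫ y, u (x - y) * fderiv ℝ f y e := by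
  have h := hc.hasFDerivAt_convolution_left (μ := volume) (ContinuousLinearMap.lsmul ℝ ℝ : ℝ →L[ℝ] ℝ →L[ℝ] ℝ)
    hf hu.locallyIntegrable x
  have e1 : (fun x => ∫ y, u (x - y) * f y) =
      MeasureTheory.convolution f u (ContinuousLinearMap.lsmul ℝ ℝ : ℝ →L[ℝ] ℝ →L[ℝ] ℝ) volume := by
    ext x
    simp [MeasureTheory.convolution, mul_comm]
  rw [e1]
  refine ⟨h.differentiableAt, ?_⟩
  rw [h.fderiv]
  have hint : Integrable (fun t => (ContinuousLinearMap.precompL (EuclideanSpace ℝ (Fin d))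
      (ContinuousLinearMap.lsmul ℝ ℝ : ℝ →L[ℝ] ℝ →L[ℝ] ℝ)) (fderiv ℝ f t) (u (x - t))) := by
    apply Continuous.integrable_of_hasCompactSupport
    · have := hf.continuous_fderiv one_ne_zero
      fun_prop
    · refine HasCompactSupport.mono (hc.fderiv (𝕜 := ℝ)) ?_
      intro t ht h0
      apply ht
      simp only [h0, map_zero, zero_apply]
  rw [MeasureTheory.convolution, ContinuousLinearMap.integral_apply hint]
  simp [ContinuousLinearMap.precompL_apply, mul_comm]

lemma even_est {d : ℕ} (k u : EuclideanSpace ℝ (Fin d) → ℝ) (hk : Continuous k)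
    (hc : HasCompactSupport k) (hsupp : ∀ y, k y ≠ 0 → ‖y‖ < 1)
    (heven : ∀ y, k (-y) = k y) (hint : ∫ y, k y = 0) (hu : Continuous u)
    (x : EuclideanSpace ℝ (Fin d)) (K : ℝ)
    (hx : ∀ h, ‖h‖ < 1 → |u (x + h) + u (x - h) - 2 * u x| ≤ K) :
    |∫ y, u (x - y) * k y| ≤ K * ∫ y, |k y| := by
  have i1 : Integrable (fun y => u (x - y) * k y) :=
    Continuous.integrable_of_hasCompactSupport (by fun_prop) hc.mul_left
  have i2 : Integrable (fun y => u (x + y) * k y) :=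
    Continuous.integrable_of_hasCompactSupport (by fun_prop) hc.mul_left
  have i3 : Integrable k := Continuous.integrable_of_hasCompactSupport (by fun_prop) hc
  have h1 : ∫ y, u (x + y) * k y = ∫ y, u (x - y) * k y := by
    rw [← integral_neg_eq_self]
    simp [heven, sub_eq_add_neg]
  have h2 : ∫ y, (u (x + y) + u (x - y) - 2 * u x) * k y = 2 * ∫ y, u (x - y) * k y := by
    have : (fun y => (u (x + y) + u (x - y) - 2 * u x) * k y) =
      fun y => (u (x + y) * k y + u (x - y) * k y) - (2 * u x) * k y := by ext y; ring
    have i4 : Integrable (fun y => u (x + y) * k y + u (x - y) * k y) := i2.add i1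
    rw [this, integral_sub i4 (i3.const_mul _), integral_add i2 i1, integral_const_mul, hint, h1]
    ring
  have h3 : |∫ y, (u (x + y) + u (x - y) - 2 * u x) * k y| ≤ ∫ y, K * |k y| := by
    rw [← Real.norm_eq_abs]
    refine norm_integral_le_of_norm_le (i3.abs.const_mul K) (Eventually.of_forall fun y => ?_)
    rw [norm_mul, Real.norm_eq_abs, Real.norm_eq_abs]
    by_cases h0 : k y = 0
    · simp [h0]
    · exact mul_le_mul_of_nonneg_right (hx y (hsupp y h0)) (abs_nonneg _)
  rw [h2, integral_const_mul, abs_mul, abs_two] at h3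
  have := abs_nonneg (∫ y, u (x - y) * k y)
  linarith

lemma fderiv_reflect {E : Type*} [NormedAddCommGroup E] [NormedSpace ℝ E] (f : E → ℝ) (c : ℝ)
    (h : ∀ y, f (-y) = c * f y) (hf : Differentiable ℝ f) (y e : E) :
    fderiv ℝ f (-y) e = (-c) * fderiv ℝ f y e := by
  have h1 : (fun y => f ((-1:ℝ) • y)) = fun y => c * f y := by
    ext y; simp [h]
  have h2 := fderiv_comp_smul (𝕜 := ℝ) (f := f) (x := y) (-1)
  rw [h1, fderiv_const_mul (hf y)] at h2
  have h3 := congrArg (fun L : E →L[ℝ] ℝ => L e) h2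
  simp at h3
  linarith

lemma integrable_norm_aux {d : ℕ} {G : Type*} [NormedAddCommGroup G] [NormedSpace ℝ G]
    (f : EuclideanSpace ℝ (Fin d) → G) (hf : ContDiff ℝ 1 f) (hc : HasCompactSupport f) :
    Integrable (fun y => ‖fderiv ℝ f y‖) :=
  Continuous.integrable_of_hasCompactSupport (hf.continuous_fderiv one_ne_zero).norm
    (hc.fderiv (𝕜 := ℝ)).norm

lemma hess_bound {d : ℕ} (α : ℝ) (hα : 0 < α)
    (ζ : EuclideanSpace ℝ (Fin d) → ℝ)
    (hsm2 : ContDiff ℝ 2 ζ) (hcpt : HasCompactSupport ζ) (hζsupp : tsupport ζ ⊆ ball 0 1)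
    (hζrad : ∀ x y, ‖x‖ = ‖y‖ → ζ x = ζ y)
    (e : EuclideanSpace ℝ (Fin d)) (he : ‖e‖ = 1)
    (r : ℝ) (u : EuclideanSpace ℝ (Fin d) → ℝ) (hu : Continuous u) (K : ℝ) (hK : 0 ≤ K)
    (hZ : ∀ x h : EuclideanSpace ℝ (Fin d), x ∈ ball 0 (2*r) → x + h ∈ ball 0 (2*r) →
        x - h ∈ ball 0 (2*r) → |u (x+h) + u (x-h) - 2 * u x| ≤ K * ‖h‖^α) :
    ∀ x ∈ ball (0:EuclideanSpace ℝ (Fin d)) (2*r-1),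
    ∀ y ∈ ball (0:EuclideanSpace ℝ (Fin d)) (2*r-1),
      |fderiv ℝ (fun x => ∫ y, u (x - y) * ζ y) x e - fderiv ℝ (fun x => ∫ y, u (x - y) * ζ y) y e|
        ≤ (∫ y, ‖fderiv ℝ (fderiv ℝ ζ) y‖) * K * ‖x - y‖ := by
  have hsm1 : ContDiff ℝ 1 ζ := hsm2.of_le (by norm_num)
  have hF1 : ContDiff ℝ 1 (fderiv ℝ ζ) := hsm2.fderiv_right (by norm_num)
  have iA : Integrable (fun y => ‖fderiv ℝ (fderiv ℝ ζ) y‖) :=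
    integrable_norm_aux (fderiv ℝ ζ) hF1 (hcpt.fderiv (𝕜 := ℝ))
  obtain ⟨A, hAdef⟩ : ∃ A : ℝ, A = ∫ y, ‖fderiv ℝ (fderiv ℝ ζ) y‖ := ⟨_, rfl⟩
  rw [← hAdef]
  have hA : 0 ≤ A := by
    rw [hAdef]; exact integral_nonneg fun y => norm_nonneg (fderiv ℝ (fderiv ℝ ζ) y)
  obtain ⟨f, hfdef⟩ : ∃ f : EuclideanSpace ℝ (Fin d) → ℝ, f = fun y => fderiv ℝ ζ y e := ⟨_, rfl⟩
  have hf1 : ContDiff ℝ 1 f := by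
    rw [hfdef]; exact hF1.clm_apply contDiff_const
  have hfc : HasCompactSupport f := by
    rw [hfdef]; exact hcpt.fderiv_apply (𝕜 := ℝ) e
  have hft : tsupport f ⊆ tsupport ζ := by
    rw [hfdef]; exact tsupport_fderiv_apply_subset ℝ e
  have hfder : ∀ y h, fderiv ℝ f y h = fderiv ℝ (fderiv ℝ ζ) y h e := by
    intro y h
    have := ((hF1.differentiable one_ne_zero y).hasFDerivAt.clm_apply (hasFDerivAt_const e y)).fderiv
    rw [hfdef, this]; simp
  have heq : ∀ x, fderiv ℝ (fun x => ∫ y, u (x - y) * ζ y) x e = ∫ y, u (x - y) * f y :=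
    fun x => by rw [hfdef]; exact (conv_deriv ζ u hsm1 hcpt hu x e).2
  have hbound : ∀ x ∈ ball (0:EuclideanSpace ℝ (Fin d)) (2*r-1),
      ‖fderiv ℝ (fun x => ∫ y, u (x - y) * f y) x‖ ≤ A * K := by
    intro x hx
    refine ContinuousLinearMap.opNorm_le_of_unit_norm (𝕜 := ℝ) (by positivity) fun h hh => ?_
    rw [(conv_deriv f u hf1 hfc hu x h).2, Real.norm_eq_abs]
    have hkcont : Continuous (fun y => fderiv ℝ f y h) :=
      (hf1.continuous_fderiv one_ne_zero).clm_apply continuous_const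
    have hkc : HasCompactSupport (fun y => fderiv ℝ f y h) := hfc.fderiv_apply (𝕜 := ℝ) h
    have hx' := mem_ball_zero_iff.1 hx
    have key := even_est (fun y => fderiv ℝ f y h) u hkcont hkc ?_ ?_ ?_ hu x K ?_
    · refine key.trans ?_
      rw [mul_comm]
      refine mul_le_mul_of_nonneg_right ?_ hK
      have i1 : Integrable (fun y => |fderiv ℝ f y h|) :=
        (hkcont.integrable_of_hasCompactSupport hkc).abs
      have hle : ∀ y, |fderiv ℝ f y h| ≤ ‖fderiv ℝ (fderiv ℝ ζ) y‖ := by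
        intro y
        rw [hfder]
        have h5 := ContinuousLinearMap.le_opNorm₂ (fderiv ℝ (fderiv ℝ ζ) y) h e
        rw [hh, he, mul_one, mul_one] at h5
        exact h5
      rw [hAdef]
      exact integral_mono i1 iA hle
    · intro y hy
      have h1 : y ∈ tsupport (fun y => fderiv ℝ f y h) := subset_tsupport _ hy
      have h2 := hζsupp (hft (tsupport_fderiv_apply_subset ℝ h h1))
      exact mem_ball_zero_iff.1 h2
    · intro y
      have h1 : ∀ y, f (-y) = (-1) * f y := fun y => by
        rw [hfdef]; exact fderiv_reflect ζ 1 (fun y => by rw [one_mul]; exact hζrad _ _ (norm_neg y))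
          (hsm1.differentiable one_ne_zero) y e
      have := fderiv_reflect f (-1) h1 (hf1.differentiable one_ne_zero) y h
      simpa using this
    · have := (conv_deriv f (fun _ => 1) hf1 hfc continuous_const 0 h).2
      simpa using this.symm
    · intro k hk
      have a1 := norm_add_le x k
      have a2 := norm_sub_le x k
      refine (hZ x k (mem_ball_zero_iff.2 (by linarith)) (mem_ball_zero_iff.2 (by linarith))
        (mem_ball_zero_iff.2 (by linarith))).trans ?_
      exact mul_le_of_le_one_right hK (Real.rpow_le_one (norm_nonneg _) hk.le hα.le)
  intro x hx y hy
  rw [heq, heq]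
  exact (convex_ball (0:EuclideanSpace ℝ (Fin d)) (2*r-1)).norm_image_sub_le_of_norm_fderiv_le (𝕜 := ℝ)
    (f := fun x => ∫ y, u (x - y) * f y)
    (fun z _ => (conv_deriv f u hf1 hfc hu z 0).1) hbound hy hx

lemma unit_scale {d : ℕ} (β α : ℝ) (hβ : 0 < β) (hβ1 : β < 1) (hα : 0 < α) (hα1 : α < 1 + β)
    (ζ : EuclideanSpace ℝ (Fin d) → ℝ)
    (hζsm : ContDiff ℝ (⊤ : ℕ∞) ζ) (hζsupp : tsupport ζ ⊆ ball 0 1)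
    (hζnn : ∀ x, 0 ≤ ζ x) (hζrad : ∀ x y, ‖x‖ = ‖y‖ → ζ x = ζ y)
    (hζint : (∫ y, ζ y) = 1) :
    ∃ C : ℝ, 0 < C ∧ ∀ r : ℝ, 1 ≤ r → ∀ u : EuclideanSpace ℝ (Fin d) → ℝ, Continuous u →
      ∀ K : ℝ, 0 ≤ K →
      (∀ x h : EuclideanSpace ℝ (Fin d), x ∈ ball 0 (2*r) → x + h ∈ ball 0 (2*r) →
        x - h ∈ ball 0 (2*r) → |u (x+h) + u (x-h) - 2 * u x| ≤ K * ‖h‖^α) →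
      ∀ x ∈ ball (0:EuclideanSpace ℝ (Fin d)) r, ∀ y ∈ ball (0:EuclideanSpace ℝ (Fin d)) r,
        ‖fderiv ℝ (fun x => ∫ y, u (x - y) * ζ y) x - fderiv ℝ (fun x => ∫ y, u (x - y) * ζ y) y‖
          ≤ C * K * ‖x - y‖^β := by
  have hcpt : HasCompactSupport ζ :=
    HasCompactSupport.of_support_subset_isCompact (isCompact_closedBall 0 1)
      ((subset_tsupport _).trans (hζsupp.trans ball_subset_closedBall))
  have hsm2 : ContDiff ℝ 2 ζ := contDiff_infty.1 hζsm 2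
  have hsm1 : ContDiff ℝ 1 ζ := hsm2.of_le (by norm_num)
  have hF1 : ContDiff ℝ 1 (fderiv ℝ ζ) := hsm2.fderiv_right (by norm_num)
  have iA : Integrable (fun y => ‖fderiv ℝ (fderiv ℝ ζ) y‖) :=
    integrable_norm_aux (fderiv ℝ ζ) hF1 (hcpt.fderiv (𝕜 := ℝ))
  set A := ∫ y, ‖fderiv ℝ (fderiv ℝ ζ) y‖ with hAdef
  have hA : 0 ≤ A := by
    rw [hAdef]; exact integral_nonneg fun y => norm_nonneg (fderiv ℝ (fderiv ℝ ζ) y)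
  have h2β : 1 < (2:ℝ)^β := Real.one_lt_rpow (by norm_num) hβ
  have hG : 0 < 1/((2:ℝ)^β-1) := by
    have : 0 < (2:ℝ)^β-1 := by linarith
    positivity
  refine ⟨6 * A + 2 * (1/((2:ℝ)^β-1)) + 50, by positivity, ?_⟩
  intro r hr u hu K hK hZ x hx y hy
  refine ContinuousLinearMap.opNorm_le_of_unit_norm (𝕜 := ℝ) (by positivity) fun e he => ?_
  rw [Real.norm_eq_abs, sub_apply]
  refine core_est β α A K r hβ hβ1 hα hα1 hA hK _
    (fun x => (conv_deriv ζ u hsm1 hcpt hu x 0).1) e he hr ?_ ?_ x y hx hy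
  · -- Hessian bound
    exact hess_bound α hα ζ hsm2 hcpt hζsupp hζrad e he r u hu K hK hZ
  · intro x h h1 h2 h3
    rw [mem_ball_zero_iff] at h1 h2 h3
    have hi : ∀ z, Integrable (fun y => u (z - y) * ζ y) := fun z =>
      Continuous.integrable_of_hasCompactSupport
        (by have := hζsm.continuous; fun_prop) hcpt.mul_left
    have iζ : Integrable ζ := hζsm.continuous.integrable_of_hasCompactSupport hcpt
    have e1 : (∫ y, u (x + h - y) * ζ y) + (∫ y, u (x - h - y) * ζ y) - 2 * ∫ y, u (x - y) * ζ y
        = ∫ y, (u (x - y + h) + u (x - y - h) - 2 * u (x - y)) * ζ y := by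
      have i4 : Integrable (fun y => u (x + h - y) * ζ y + u (x - h - y) * ζ y) :=
        (hi (x + h)).add (hi (x - h))
      rw [← integral_const_mul, ← integral_add (hi _) (hi _),
        ← integral_sub i4 ((hi _).const_mul 2)]
      congr 1; ext y
      rw [show x + h - y = x - y + h by abel, show x - h - y = x - y - h by abel]
      ring
    rw [e1, ← Real.norm_eq_abs]
    have : K * ‖h‖^α = ∫ y, K * ‖h‖^α * ζ y := by rw [integral_const_mul, hζint, mul_one]
    rw [this]
    refine norm_integral_le_of_norm_le (iζ.const_mul _) (Eventually.of_forall fun y => ?_)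
    rw [norm_mul, Real.norm_eq_abs, Real.norm_of_nonneg (hζnn y)]
    by_cases h0 : ζ y = 0
    · simp [h0]
    · have hy1 : ‖y‖ < 1 := mem_ball_zero_iff.1 (hζsupp (subset_tsupport _ h0))
      refine mul_le_mul_of_nonneg_right (hZ _ _ ?_ ?_ ?_) (hζnn y)
      · have := norm_sub_le x y
        exact mem_ball_zero_iff.2 (by linarith)
      · have := norm_sub_le (x + h) y
        rw [show x - y + h = x + h - y by abel]
        exact mem_ball_zero_iff.2 (by linarith)
      · have := norm_sub_le (x - h) y
        rw [show x - y - h = x - h - y by abel]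
        exact mem_ball_zero_iff.2 (by linarith)

/-- Lemma 2.1: Hölder estimate for the gradient of a mollification in terms of the Zygmund
seminorm. -/
theorem gradient_mollify_holder_estimate
    (d : ℕ) (hd : 1 ≤ d) (β α : ℝ) (hβ : β ∈ Set.Ioo (0:ℝ) 1)
    (hα : 0 < α) (hα1 : α < 1 + β)
    (ζ : EuclideanSpace ℝ (Fin d) → ℝ)
    (hζsm : ContDiff ℝ (⊤ : ℕ∞) ζ) (hζsupp : tsupport ζ ⊆ ball 0 1)
    (hζnn : ∀ x, 0 ≤ ζ x) (hζrad : ∀ x y, ‖x‖ = ‖y‖ → ζ x = ζ y)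
    (hζint : (∫ y, ζ y) = 1) :
    ∃ C : ℝ, 0 < C ∧
      ∀ R R1 : ℝ, 0 < R → R ≤ R1 →
        ∀ u : EuclideanSpace ℝ (Fin d) → ℝ, Continuous u →
          zygmundSemi α (ball (0:EuclideanSpace ℝ (Fin d)) (2 * R1)) u < ⊤ →
          holderSemi β (ball (0:EuclideanSpace ℝ (Fin d)) R1) (gradient (mollify R ζ u)) ≤
            ENNReal.ofReal (C * R ^ (α - 1 - β)) *
              zygmundSemi α (ball (0:EuclideanSpace ℝ (Fin d)) (2 * R1)) u := by
  obtain ⟨C, hC, hmain⟩ := unit_scale β α hβ.1 hβ.2 hα hα1 ζ hζsm hζsupp hζnn hζrad hζint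
  refine ⟨C, hC, ?_⟩
  intro R R1 hR hRR u hu hfin
  set Z := zygmundSemi α (ball (0:EuclideanSpace ℝ (Fin d)) (2 * R1)) u with hZdef
  set K := Z.toReal with hKdef
  have hK : 0 ≤ K := ENNReal.toReal_nonneg
  have hZu : ∀ x h : EuclideanSpace ℝ (Fin d), x ∈ ball 0 (2*R1) → x + h ∈ ball 0 (2*R1) →
      x - h ∈ ball 0 (2*R1) → |u (x+h) + u (x-h) - 2 * u x| ≤ K * ‖h‖^α := by
    intro x h h1 h2 h3
    by_cases h0 : h = 0
    · subst h0
      have : u x + u x - 2 * u x = 0 := by ring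
      simp [this, Real.zero_rpow hα.ne']
    · have hle : ENNReal.ofReal (|u (x + h) + u (x - h) - 2 * u x| / ‖h‖ ^ α) ≤ Z := by
        rw [hZdef, zygmundSemi]
        exact le_iSup_of_le x (le_iSup_of_le h (le_iSup_of_le h0 (le_iSup_of_le h1
          (le_iSup_of_le h2 (le_iSup_of_le h3 le_rfl)))))
      have hp : 0 < ‖h‖^α := Real.rpow_pos_of_pos (norm_pos_iff.2 h0) _
      rw [ENNReal.ofReal_le_iff_le_toReal hfin.ne] at hle
      exact (div_le_iff₀ hp).1 hle
  have hsc := hmain (R1 / R) ((one_le_div hR).2 hRR) (fun z => u (R • z)) (by fun_prop)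
    (K * R^α) (by positivity) ?_
  swap
  · have hsb : ∀ z : EuclideanSpace ℝ (Fin d), z ∈ ball 0 (2 * (R1/R)) → R • z ∈ ball 0 (2*R1) := by
      intro z hz
      rw [mem_ball_zero_iff] at *
      rw [norm_smul, Real.norm_of_nonneg hR.le]
      calc R * ‖z‖ < R * (2 * (R1/R)) := by gcongr
        _ = 2 * R1 := by field_simp
    intro x h h1 h2 h3
    have := hZu (R • x) (R • h) (hsb x h1) (by rw [← smul_add]; exact hsb _ h2)
      (by rw [← smul_sub]; exact hsb _ h3)
    rw [norm_smul, Real.norm_of_nonneg hR.le, Real.mul_rpow hR.le (norm_nonneg _),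
      ← smul_add, ← smul_sub, ← mul_assoc] at this
    exact this
  set V : EuclideanSpace ℝ (Fin d) → ℝ := fun x => ∫ y, u (R • (x - y)) * ζ y with hV
  have hmol : mollify R ζ u = fun x => V (R⁻¹ • x) := by
    ext x
    simp only [mollify, hV, smul_sub, smul_inv_smul₀ hR.ne']
  have hgrad : ∀ x y, ‖gradient (mollify R ζ u) x - gradient (mollify R ζ u) y‖ =
      R⁻¹ * ‖fderiv ℝ V (R⁻¹ • x) - fderiv ℝ V (R⁻¹ • y)‖ := by
    intro x y
    rw [gradient, gradient, ← map_sub, LinearIsometryEquiv.norm_map, hmol, fderiv_comp_smul,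
      fderiv_comp_smul, ← smul_sub, norm_smul, Real.norm_of_nonneg (inv_nonneg.2 hR.le)]
  have hball : ∀ z : EuclideanSpace ℝ (Fin d), z ∈ ball 0 R1 → R⁻¹ • z ∈ ball 0 (R1/R) := by
    intro z hz
    rw [mem_ball_zero_iff] at *
    rw [norm_smul, Real.norm_of_nonneg (inv_nonneg.2 hR.le), div_eq_inv_mul]
    gcongr
  have hZeq : Z = ENNReal.ofReal K := (ENNReal.ofReal_toReal hfin.ne).symm
  rw [hZeq, ← ENNReal.ofReal_mul (by positivity), holderSemi]
  refine iSup_le fun x => iSup_le fun hx => iSup_le fun y => iSup_le fun hy => iSup_le fun hxy => ?_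
  refine ENNReal.ofReal_le_ofReal ?_
  have hp : 0 < ‖x - y‖^β := Real.rpow_pos_of_pos (norm_pos_iff.2 (sub_ne_zero.2 hxy)) _
  rw [div_le_iff₀ hp, hgrad]
  have h1 := hsc (R⁻¹ • x) (hball x hx) (R⁻¹ • y) (hball y hy)
  rw [← smul_sub, norm_smul, Real.norm_of_nonneg (inv_nonneg.2 hR.le),
    Real.mul_rpow (inv_nonneg.2 hR.le) (norm_nonneg _), Real.inv_rpow hR.le] at h1
  have hpow : R^(α - 1 - β) = R⁻¹ * R^α * (R^β)⁻¹ := by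
    rw [Real.rpow_sub hR, Real.rpow_sub hR, Real.rpow_one]
    field_simp
  rw [hpow]
  calc _ ≤ R⁻¹ * _ := mul_le_mul_of_nonneg_left h1 (inv_nonneg.2 hR.le)
    _ = _ := by ring
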